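/- Let M ≥ 3 be an integer, let (u_0, u_1, …, u_M) solve the optimality system, and let b ∈ (γ_min, 1/2) satisfy b < γ_M < 1/2. If γ_{M−1} < (1 + h'_M(b))·(1 + γ_M·(1/2 − b))/(1/2 − b), then u_{M−2} < u_{M−1}·(γ_M + 1/2). -/

import Mathlib

noncomputable def gammaMin (d : ℕ) (β : ℝ) : ℝ := β / (2 * β + d)

noncomputable def gammaMax (d : ℕ) (β : ℝ) : ℝ := (β + d) / (2 * β + d)

noncomputable def Sset (d : ℕ) (β : ℝ) : Set ℝ := Set.Icc (gammaMin d β) (gammaMax d β)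

noncomputable def hFun (M : ℕ) (γ : ℝ) : ℝ := (1 - γ) / (1 - γ ^ M)

/-- φ_M(x) = min_{γ∈𝒮} (γ·x + h_M(γ)). -/
noncomputable def phiFun (d : ℕ) (β : ℝ) (M : ℕ) (x : ℝ) : ℝ :=
  sInf ((fun γ => γ * x + hFun M γ) '' Sset d β)

/-- (u_0, …, u_M) solves the optimality system: u_0 = 0, u_M = 1,
0 < u_1 < ⋯ < u_{M−1} < 1, and u_i = u_1 + φ_M(u_{i−1}) for 2 ≤ i ≤ M. -/
def SolvesOptSystem (d : ℕ) (β : ℝ) (M : ℕ) (u : ℕ → ℝ) : Prop :=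
  u 0 = 0 ∧ u M = 1 ∧ 0 < u 1 ∧ u (M - 1) < 1 ∧
  (∀ i, 1 ≤ i → i + 1 ≤ M - 1 → u i < u (i + 1)) ∧
  ∀ i, 2 ≤ i → i ≤ M → u i = u 1 + phiFun d β M (u (i - 1))

/-- S_n(a) = Σ_{k=0}^{n−1} a^{−k}. -/
noncomputable def Sgeo (n : ℕ) (a : ℝ) : ℝ := ∑ k ∈ Finset.range n, a⁻¹ ^ k

/-!
Write `x = u (M - 1)`, `y = u (M - 2)` and let `g`, `k` be the minimizers at `x`, `y`. Three
consequences of minimality drive the proof: comparing `g` with `b < g` and using the tangent-line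
inequality for `h_M` at `b` (an instance of Chebyshev's sum inequality) gives `h_M'(b) ≤ -x`;
minimizers increase as the slope decreases, so `g ≤ k`; and testing `k` in the minimum defining
`u M = 1` gives `1 - x ≤ k (x - y)`. With `c = 1/2 - b` the hypothesis on `k` becomes
`k c < (1 - x) (1 + g c)`, which self-improves to `k c x < 1 - x` because `g ≤ k`. Hence
`c x < x - y`, that is `y < x (b + 1/2) < x (g + 1/2)`.
-/

open Finset

section ChebyshevSum

variable {R : Type*} [CommRing R] [LinearOrder R] [IsStrictOrderedRing R] {a b : R}

theorem pow_mul_pow_sub_le_pow_mul_pow_sub (hb : 0 ≤ b) (hba : b ≤ a) {i j n : ℕ} (hij : i ≤ j)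
    (hjn : j ≤ n) : a ^ i * b ^ (n - i) ≤ a ^ j * b ^ (n - j) := by
  have ha : 0 ≤ a := hb.trans hba
  calc a ^ i * b ^ (n - i) = a ^ i * b ^ (j - i) * b ^ (n - j) := by
        rw [mul_assoc, ← pow_add]; congr 2; omega
    _ ≤ a ^ i * a ^ (j - i) * b ^ (n - j) := by gcongr
    _ = a ^ j * b ^ (n - j) := by rw [← pow_add, Nat.add_sub_cancel' hij]

theorem nat_mul_pow_mul_geom_sum_le (hb : 0 ≤ b) (hb1 : b ≤ 1) (hba : b ≤ a) (n : ℕ) :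
    n * b ^ (n - 1) * ∑ i ∈ range n, a ^ i ≤
      (∑ i ∈ range n, a ^ i * b ^ (n - 1 - i)) * ∑ i ∈ range n, b ^ i := by
  have hmono : MonotoneOn (fun i => a ^ i * b ^ (n - 1 - i)) (range n : Set ℕ) :=
    fun i _ j hj hij ↦ pow_mul_pow_sub_le_pow_mul_pow_sub hb hba hij
      (Nat.le_sub_one_of_lt (mem_range.1 hj))
  have hanti : AntitoneOn (fun i => b ^ i) (range n : Set ℕ) :=
    (pow_right_anti₀ hb hb1).antitoneOn _
  have hsum : ∑ i ∈ range n, a ^ i * b ^ (n - 1 - i) * b ^ i =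
      b ^ (n - 1) * ∑ i ∈ range n, a ^ i := by
    rw [mul_sum]
    refine sum_congr rfl fun i hi ↦ ?_
    rw [mul_assoc, pow_sub_mul_pow b (Nat.le_sub_one_of_lt (mem_range.1 hi)), mul_comm]
  calc n * b ^ (n - 1) * ∑ i ∈ range n, a ^ i
      = #(range n) * ∑ i ∈ range n, a ^ i * b ^ (n - 1 - i) * b ^ i := by
        rw [hsum, card_range, mul_assoc]
    _ ≤ _ := (hmono.antivaryOn hanti).card_mul_sum_le_sum_mul_sum

end ChebyshevSum

section HFun

variable {M : ℕ} {b g : ℝ}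

theorem hasDerivAt_hFun (hb : b ^ M ≠ 1) :
    HasDerivAt (hFun M) (((1 - b) * (M * b ^ (M - 1)) - (1 - b ^ M)) / (1 - b ^ M) ^ 2) b := by
  have hnum : HasDerivAt (fun x : ℝ ↦ 1 - x) (-1) b := (hasDerivAt_id b).const_sub 1
  have hden : HasDerivAt (fun x : ℝ ↦ 1 - x ^ M) (-(M * b ^ (M - 1))) b :=
    (hasDerivAt_pow M b).const_sub 1
  refine (hnum.div hden (sub_ne_zero.2 hb.symm)).congr_deriv ?_
  ring

theorem slope_hFun (hbg : b ≠ g) (hb : b ^ M ≠ 1) (hg : g ^ M ≠ 1) :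
    slope (hFun M) b g =
      ((1 - b) * ∑ i ∈ range M, g ^ i * b ^ (M - 1 - i) - (1 - b ^ M)) /
        ((1 - g ^ M) * (1 - b ^ M)) := by
  have hsum : (∑ i ∈ range M, g ^ i * b ^ (M - 1 - i)) * (g - b) = g ^ M - b ^ M :=
    (Commute.all g b).geom_sum₂_mul M
  have hB : 1 - b ^ M ≠ 0 := sub_ne_zero.2 hb.symm
  have hG : 1 - g ^ M ≠ 0 := sub_ne_zero.2 hg.symm
  have hgb : g - b ≠ 0 := sub_ne_zero.2 hbg.symm
  rw [slope_def_field, hFun, hFun, div_sub_div _ _ hG hB, div_div,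
    div_eq_div_iff (mul_ne_zero (mul_ne_zero hG hB) hgb) (mul_ne_zero hG hB)]
  linear_combination (-(1 - b) * (1 - g ^ M) * (1 - b ^ M)) * hsum

theorem deriv_hFun_le_slope (hM : M ≠ 0) (hb : 0 ≤ b) (hbg : b < g) (hg : g < 1) :
    deriv (hFun M) b ≤ slope (hFun M) b g := by
  have hb1 : b < 1 := hbg.trans hg
  have hbM : b ^ M < 1 := pow_lt_one₀ hb hb1 hM
  have hgM : g ^ M < 1 := pow_lt_one₀ (hb.trans hbg.le) hg hM
  have hB : 0 < 1 - b ^ M := sub_pos.2 hbM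
  have hG : 0 < 1 - g ^ M := sub_pos.2 hgM
  rw [(hasDerivAt_hFun hbM.ne).deriv, slope_hFun hbg.ne hbM.ne hgM.ne]
  have hcheb := nat_mul_pow_mul_geom_sum_le hb hb1.le hbg.le M
  have hsum : (∑ i ∈ range M, g ^ i * b ^ (M - 1 - i)) * (g - b) = g ^ M - b ^ M :=
    (Commute.all g b).geom_sum₂_mul M
  have hsumb : (∑ i ∈ range M, b ^ i) * (1 - b) = 1 - b ^ M := geom_sum_mul_neg b M
  have hsumg : (∑ i ∈ range M, g ^ i) * (1 - g) = 1 - g ^ M := geom_sum_mul_neg g M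
  set S := ∑ i ∈ range M, g ^ i * b ^ (M - 1 - i)
  have hcheb' : (1 - b) * (M * b ^ (M - 1)) * (1 - g ^ M) ≤ (1 - g) * S * (1 - b ^ M) := by
    have hpos : 0 ≤ (1 - b) * (1 - g) := mul_nonneg (sub_pos.2 hb1).le (sub_pos.2 hg).le
    rw [← hsumb, ← hsumg]
    linarith [mul_le_mul_of_nonneg_right hcheb hpos]
  have hnum : ((1 - b) * (M * b ^ (M - 1)) - (1 - b ^ M)) * (1 - g ^ M) ≤
      ((1 - b) * S - (1 - b ^ M)) * (1 - b ^ M) := by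
    linear_combination hcheb' - (1 - b ^ M) * hsum
  rw [div_le_div_iff₀ (pow_pos hB 2) (mul_pos hG hB)]
  linarith [mul_le_mul_of_nonneg_right hnum hB.le]

end HFun

section LinearPerturbation

variable {s : Set ℝ} {h : ℝ → ℝ} {x y g k b : ℝ}

theorem slope_le_neg_of_isMinOn (hg : IsMinOn (fun γ ↦ γ * x + h γ) s g) (hb : b ∈ s)
    (hbg : b < g) : slope h b g ≤ -x := by
  have hle : g * x + h g ≤ b * x + h b := hg hb
  rw [slope_def_field, div_le_iff₀ (sub_pos.2 hbg)]
  linarith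

theorem le_of_isMinOn_of_lt (hyx : y < x) (hgs : g ∈ s) (hks : k ∈ s)
    (hg : IsMinOn (fun γ ↦ γ * x + h γ) s g) (hk : IsMinOn (fun γ ↦ γ * y + h γ) s k) :
    g ≤ k := by
  have hgk : g * x + h g ≤ k * x + h k := hg hks
  have hkg : k * y + h k ≤ g * y + h g := hk hgs
  refine le_of_mul_le_mul_right ?_ (sub_pos.2 hyx)
  linarith

end LinearPerturbation

theorem Sset_subset_Ioo (d : ℕ) {β : ℝ} (hβ : 0 < β) : Sset d β ⊆ Set.Ioo 0 1 := by
  have hmin : 0 < gammaMin d β := by unfold gammaMin; positivity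
  have hmax : gammaMax d β < 1 := by
    rw [gammaMax, div_lt_one (by positivity)]
    linarith
  exact fun γ hγ ↦ ⟨hmin.trans_le hγ.1, hγ.2.trans_lt hmax⟩

theorem phiFun_eq_of_isMinOn {d : ℕ} {β : ℝ} {M : ℕ} {x g : ℝ} (hgS : g ∈ Sset d β)
    (hg : IsMinOn (fun γ ↦ γ * x + hFun M γ) (Sset d β) g) :
    phiFun d β M x = g * x + hFun M g :=
  IsLeast.csInf_eq ⟨Set.mem_image_of_mem _ hgS, Set.forall_mem_image.2 hg⟩

namespace SolvesOptSystem

variable {d : ℕ} {β : ℝ} {M : ℕ} {u : ℕ → ℝ} {i : ℕ} {g k : ℝ}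

theorem lt_succ (hsol : SolvesOptSystem d β M u) (hi : 1 ≤ i) (hiM : i + 1 ≤ M - 1) :
    u i < u (i + 1) :=
  hsol.2.2.2.2.1 i hi hiM

theorem pos (hsol : SolvesOptSystem d β M u) (hi : 1 ≤ i) (hiM : i ≤ M - 1) : 0 < u i := by
  induction i, hi using Nat.le_induction with
  | base => exact hsol.2.2.1
  | succ n hn ih => exact (ih (by omega)).trans (hsol.lt_succ hn hiM)

theorem succ_eq_of_isMinOn (hsol : SolvesOptSystem d β M u) (hi : 1 ≤ i) (hiM : i + 1 ≤ M)
    (hgS : g ∈ Sset d β) (hg : IsMinOn (fun γ ↦ γ * u i + hFun M γ) (Sset d β) g) :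
    u (i + 1) = u 1 + (g * u i + hFun M g) := by
  rw [← phiFun_eq_of_isMinOn hgS hg]
  exact hsol.2.2.2.2.2 (i + 1) (by omega) hiM

theorem sub_le_mul_sub (hsol : SolvesOptSystem d β M u) (hi : 1 ≤ i) (hiM : i + 2 ≤ M)
    (hgS : g ∈ Sset d β) (hkS : k ∈ Sset d β)
    (hg : IsMinOn (fun γ ↦ γ * u (i + 1) + hFun M γ) (Sset d β) g)
    (hk : IsMinOn (fun γ ↦ γ * u i + hFun M γ) (Sset d β) k) :
    u (i + 2) - u (i + 1) ≤ k * (u (i + 1) - u i) := by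
  have hgk : g * u (i + 1) + hFun M g ≤ k * u (i + 1) + hFun M k := hg hkS
  have hi1 := hsol.succ_eq_of_isMinOn hi (by omega) hkS hk
  have hi2 := hsol.succ_eq_of_isMinOn (by omega) hiM hgS hg
  linarith

end SolvesOptSystem

theorem mul_mul_lt_one_sub {c x g k : ℝ} (hc : 0 ≤ c) (hx0 : 0 < x) (hx1 : x < 1) (hgk : g ≤ k)
    (h : k * c < (1 - x) * (1 + g * c)) : k * c * x < 1 - x := by
  have hgc : g * c ≤ k * c := mul_le_mul_of_nonneg_right hgk hc
  have hlt : (1 + g * c) * x < 1 := by linarith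
  calc k * c * x < (1 - x) * (1 + g * c) * x := mul_lt_mul_of_pos_right h hx0
    _ = (1 - x) * ((1 + g * c) * x) := mul_assoc _ _ _
    _ < 1 - x := mul_lt_of_lt_one_right (sub_pos.2 hx1) hlt

theorem stmt13_general (d : ℕ) (β : ℝ) (hβ : 0 < β) (M : ℕ) (hM3 : 3 ≤ M)
    (u : ℕ → ℝ) (hsol : SolvesOptSystem d β M u)
    (b : ℝ) (hb : b ∈ Sset d β) (c : ℝ) (hc : 0 < c)
    (gM gM1 : ℝ) (hgM : gM ∈ Sset d β)
    (hgMmin : IsMinOn (fun γ ↦ γ * u (M - 1) + hFun M γ) (Sset d β) gM)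
    (hgM1 : gM1 ∈ Sset d β)
    (hgM1min : IsMinOn (fun γ ↦ γ * u (M - 2) + hFun M γ) (Sset d β) gM1)
    (hbg : b < gM)
    (hcond : gM1 < (1 + deriv (hFun M) b) * (1 + gM * c) / c) :
    u (M - 2) < u (M - 1) * (1 - c) := by
  obtain ⟨m, rfl⟩ : ∃ m, M = m + 2 := ⟨M - 2, by omega⟩
  change IsMinOn (fun γ ↦ γ * u (m + 1) + hFun (m + 2) γ) _ _ at hgMmin
  change u m < u (m + 1) * (1 - c)
  have hm : 1 ≤ m := by omega
  have ⟨_, hlast, _, hlt_one, _⟩ := hsol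
  have hgM01 := Sset_subset_Ioo d hβ hgM
  have hgM1pos : 0 < gM1 := (Sset_subset_Ioo d hβ hgM1).1
  have hderiv : deriv (hFun (m + 2)) b ≤ -u (m + 1) :=
    (deriv_hFun_le_slope (by omega) (Sset_subset_Ioo d hβ hb).1.le hbg hgM01.2).trans
      (slope_le_neg_of_isMinOn hgMmin hb hbg)
  have hle : gM ≤ gM1 := le_of_isMinOn_of_lt (hsol.lt_succ hm le_rfl) hgM hgM1 hgMmin hgM1min
  have hstep : 1 - u (m + 1) ≤ gM1 * (u (m + 1) - u m) := by
    simpa only [hlast] using hsol.sub_le_mul_sub hm le_rfl hgM hgM1 hgMmin hgM1min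
  have hbound : gM1 * c < (1 - u (m + 1)) * (1 + gM * c) :=
    ((lt_div_iff₀ hc).1 hcond).trans_le <| mul_le_mul_of_nonneg_right (by linarith)
      (add_pos one_pos (mul_pos hgM01.1 hc)).le
  have hself : gM1 * c * u (m + 1) < 1 - u (m + 1) :=
    mul_mul_lt_one_sub hc.le (hsol.pos (by omega) le_rfl) hlt_one hle hbound
  have hgap : c * u (m + 1) < u (m + 1) - u m :=
    lt_of_mul_lt_mul_left (by linarith) hgM1pos.le
  linarith

theorem stmt13 (d : ℕ) (hd : 1 ≤ d) (β : ℝ) (hβ : 0 < β) (M : ℕ) (hM3 : 3 ≤ M)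
    (u : ℕ → ℝ) (hsol : SolvesOptSystem d β M u)
    (b : ℝ) (hb1 : gammaMin d β < b) (hb2 : b < 1 / 2)
    (gM gM1 : ℝ) (hgM : gM ∈ Sset d β)
    (hgMmin : ∀ γ ∈ Sset d β,
      gM * u (M - 1) + hFun M gM ≤ γ * u (M - 1) + hFun M γ)
    (hgM1 : gM1 ∈ Sset d β)
    (hgM1min : ∀ γ ∈ Sset d β,
      gM1 * u (M - 2) + hFun M gM1 ≤ γ * u (M - 2) + hFun M γ)
    (hbg : b < gM) (hg12 : gM < 1 / 2)
    (hcond : gM1 < (1 + deriv (hFun M) b) * (1 + gM * (1 / 2 - b)) / (1 / 2 - b)) :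
    u (M - 2) < u (M - 1) * (gM + 1 / 2) := by
  have h := stmt13_general d β hβ M hM3 u hsol b ⟨hb1.le, hbg.le.trans hgM.2⟩ (1 / 2 - b)
    (sub_pos.2 hb2) gM gM1 hgM hgMmin hgM1 hgM1min hbg hcond
  exact h.trans_le (mul_le_mul_of_nonneg_left (by linarith) (hsol.pos (by omega) le_rfl).le)
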